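/- Let q : ℤ → (ℝ² → ℝ) be C³ functions satisfying the two-dimensional Toda lattice q_{xy}(j) = h(j) − h(j−1), where h(j) := exp(q(j+1) − q(j)) and b(j) := q_x(j). Let B¹, B², B³ : ℤ → (ℝ² → ℝ) be C¹ functions satisfying ∂_x b(j) = B¹(j) − B¹(j−1), ∂_y B¹(j) = ∂_x h(j), ∂_x B¹(j) = B¹(j)(b(j+1) − b(j)) + B²(j) − B²(j−1), ∂_y B²(j) = h(j) B¹(j+1) − h(j+1) B¹(j), ∂_x B²(j) = B²(j)(b(j+2) − b(j)) + B³(j) − B³(j−1), and ∂_y B³(j) = h(j) B²(j+1) − h(j+2) B²(j), for all j. Define F(j) := b(j)³ + B²(j) + B²(j−1) + B²(j−2) + B¹(j)(2b(j) + b(j+1)) + B¹(j−1)(2b(j) + b(j−1)). Then for all j ∈ ℤ: ∂_y ∂_x F(j) = h(j)(F(j+1) − F(j)) − h(j−1)(F(j) − F(j−1)). (This expresses that the third-order flow defines a symmetry of the Toda lattice.) -/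

import Mathlib

/-- Partial derivative in the first (x) variable. -/
noncomputable def pdx (f : ℝ × ℝ → ℝ) : ℝ × ℝ → ℝ :=
  fun p => deriv (fun t => f (t, p.2)) p.1

/-- Partial derivative in the second (y) variable. -/
noncomputable def pdy (f : ℝ × ℝ → ℝ) : ℝ × ℝ → ℝ :=
  fun p => deriv (fun t => f (p.1, t)) p.2

/-!
Write `E` for the shift `j ↦ j + 1` and consider the formal Lax operator
`L = E + b(j) + B1(j - 1) E⁻¹ + B2(j - 2) E⁻² + B3(j - 3) E⁻³ + ⋯`.
The hypotheses are components of `L_x = [E + b, L]` and of `L_y = [L, h(j - 1) E⁻¹]`, and `L³`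
obeys the same two equations. The third-order flow `F(j)` is the `E⁰`-coefficient of `L³`. With
`P(j - 1)` the `E⁻¹`-coefficient of `L³`, comparing coefficients gives `F_x(j) = P(j) - P(j - 1)`
and `P_y(j) = h(j) (F(j + 1) - F(j))`; differentiating the first relation in `y` and inserting the
second is the symmetry condition.
-/

theorem hasDerivAt_pdx {f : ℝ × ℝ → ℝ} {p : ℝ × ℝ} (hf : DifferentiableAt ℝ f p) :
    HasDerivAt (fun t => f (t, p.2)) (pdx f p) p.1 := by
  have slice : DifferentiableAt ℝ (fun t => f (t, p.2)) p.1 := by fun_prop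
  exact slice.hasDerivAt

theorem hasDerivAt_pdy {f : ℝ × ℝ → ℝ} {p : ℝ × ℝ} (hf : DifferentiableAt ℝ f p) :
    HasDerivAt (fun t => f (p.1, t)) (pdy f p) p.2 := by
  have slice : DifferentiableAt ℝ (fun t => f (p.1, t)) p.2 := by fun_prop
  exact slice.hasDerivAt

theorem pdx_eq_fderiv_apply {f : ℝ × ℝ → ℝ} {p : ℝ × ℝ} (hf : DifferentiableAt ℝ f p) :
    pdx f p = fderiv ℝ f p (1, 0) :=
  (hf.hasFDerivAt.comp_hasDerivAt p.1
    ((hasDerivAt_id p.1).prodMk (hasDerivAt_const p.1 p.2))).deriv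

theorem contDiff_pdx {f : ℝ × ℝ → ℝ} {m n : WithTop ℕ∞} (hf : ContDiff ℝ n f)
    (hmn : m + 1 ≤ n) : ContDiff ℝ m (pdx f) := by
  have hn : n ≠ 0 := by
    rintro rfl
    simp at hmn
  have eq_fderiv : pdx f = fun p => fderiv ℝ f p (1, 0) :=
    funext fun p => pdx_eq_fderiv_apply (hf.differentiable hn p)
  rw [eq_fderiv]
  exact (hf.fderiv_right hmn).clm_apply contDiff_const

theorem pdx_exp_sub {f g : ℝ × ℝ → ℝ} {p : ℝ × ℝ} (hf : DifferentiableAt ℝ f p)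
    (hg : DifferentiableAt ℝ g p) :
    pdx (fun r => Real.exp (f r - g r)) p = Real.exp (f p - g p) * (pdx f p - pdx g p) :=
  ((hasDerivAt_pdx hf).sub (hasDerivAt_pdx hg)).exp.deriv

/-- The right-hand side `F(j)` of the third-order flow: the `E⁰`-coefficient of `L³` at site `j`.
The ring `R` may be one of values at a point or one of functions. -/
def thirdOrderFlow {R : Type*} [CommRing R] (b B1 B2 : ℤ → R) (j : ℤ) : R :=
  b j ^ 3 + (B2 j + B2 (j - 1) + B2 (j - 2)) + B1 j * (2 * b j + b (j + 1))
    + B1 (j - 1) * (2 * b j + b (j - 1))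

/-- The flux `P(j)` in the conservation law `F_x(j) = P(j) - P(j - 1)` of the third-order flow `F`:
the `E⁻¹`-coefficient of `L³` at site `j + 1`. -/
def thirdOrderFlux {R : Type*} [CommRing R] (b B1 B2 B3 : ℤ → R) (j : ℤ) : R :=
  (B3 j + B3 (j - 1) + B3 (j - 2))
    + (B2 j * (b j + b (j + 1) + b (j + 2)) + B2 (j - 1) * (b (j - 1) + b j + b (j + 1)))
    + B1 j * (b j ^ 2 + b j * b (j + 1) + b (j + 1) ^ 2)
    + B1 j * (B1 (j - 1) + B1 j + B1 (j + 1))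

section LatticeCurves

variable {𝕜 A : Type*} [NontriviallyNormedField 𝕜] [NormedCommRing A] [NormedAlgebra 𝕜 A]
  {b B1 B2 B3 : ℤ → 𝕜 → A}

theorem hasDerivAt_thirdOrderFlow {x : 𝕜}
    (hb : ∀ j, HasDerivAt (b j) (B1 j x - B1 (j - 1) x) x)
    (hB1 : ∀ j, HasDerivAt (B1 j) (B1 j x * (b (j + 1) x - b j x) + B2 j x - B2 (j - 1) x) x)
    (hB2 : ∀ j, HasDerivAt (B2 j) (B2 j x * (b (j + 2) x - b j x) + B3 j x - B3 (j - 1) x) x)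
    (j : ℤ) :
    HasDerivAt (thirdOrderFlow b B1 B2 j)
      (thirdOrderFlux b B1 B2 B3 j x - thirdOrderFlux b B1 B2 B3 (j - 1) x) x := by
  have cube := (hb j).pow 3
  have sumB2 := ((hB2 j).add (hB2 (j - 1))).add (hB2 (j - 2))
  have right := (hB1 j).mul (((hb j).const_mul 2).add (hb (j + 1)))
  have left := (hB1 (j - 1)).mul (((hb j).const_mul 2).add (hb (j - 1)))
  refine (((cube.add sumB2).add right).add left).congr_deriv ?_
  simp only [thirdOrderFlux, Pi.add_apply, Pi.mul_apply, Pi.pow_apply]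
  ring_nf

theorem hasDerivAt_thirdOrderFlux {h : ℤ → A} {y : 𝕜}
    (hb : ∀ j, HasDerivAt (b j) (h j - h (j - 1)) y)
    (hB1 : ∀ j, HasDerivAt (B1 j) (h j * (b (j + 1) y - b j y)) y)
    (hB2 : ∀ j, HasDerivAt (B2 j) (h j * B1 (j + 1) y - h (j + 1) * B1 j y) y)
    (hB3 : ∀ j, HasDerivAt (B3 j) (h j * B2 (j + 1) y - h (j + 2) * B2 j y) y) (j : ℤ) :
    HasDerivAt (thirdOrderFlux b B1 B2 B3 j)
      (h j * (thirdOrderFlow b B1 B2 (j + 1) y - thirdOrderFlow b B1 B2 j y)) y := by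
  have sumB3 := ((hB3 j).add (hB3 (j - 1))).add (hB3 (j - 2))
  have linearB2 := ((hB2 j).mul (((hb j).add (hb (j + 1))).add (hb (j + 2)))).add
    ((hB2 (j - 1)).mul (((hb (j - 1)).add (hb j)).add (hb (j + 1))))
  have linearB1 := (hB1 j).mul
    ((((hb j).pow 2).add ((hb j).mul (hb (j + 1)))).add ((hb (j + 1)).pow 2))
  have quadraticB1 := (hB1 j).mul (((hB1 (j - 1)).add (hB1 j)).add (hB1 (j + 1)))
  refine (((sumB3.add linearB2).add linearB1).add quadraticB1).congr_deriv ?_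
  simp only [thirdOrderFlow, Pi.add_apply, Pi.mul_apply, Pi.pow_apply, Pi.ofNat_apply]
  ring_nf

end LatticeCurves

section LatticeFields

variable {b B1 B2 B3 : ℤ → ℝ × ℝ → ℝ}

theorem pdx_thirdOrderFlow (hb : ∀ j, Differentiable ℝ (b j))
    (hB1 : ∀ j, Differentiable ℝ (B1 j)) (hB2 : ∀ j, Differentiable ℝ (B2 j))
    (b_x : ∀ j p, pdx (b j) p = B1 j p - B1 (j - 1) p)
    (B1_x : ∀ j p, pdx (B1 j) p = B1 j p * (b (j + 1) p - b j p) + B2 j p - B2 (j - 1) p)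
    (B2_x : ∀ j p, pdx (B2 j) p = B2 j p * (b (j + 2) p - b j p) + B3 j p - B3 (j - 1) p)
    (j : ℤ) :
    pdx (thirdOrderFlow b B1 B2 j)
      = fun p => thirdOrderFlux b B1 B2 B3 j p - thirdOrderFlux b B1 B2 B3 (j - 1) p :=
  funext fun p =>
    (hasDerivAt_thirdOrderFlow (b := fun i t => b i (t, p.2)) (B1 := fun i t => B1 i (t, p.2))
      (B2 := fun i t => B2 i (t, p.2)) (B3 := fun i t => B3 i (t, p.2))
      (fun i => b_x i p ▸ hasDerivAt_pdx (hb i p))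
      (fun i => B1_x i p ▸ hasDerivAt_pdx (hB1 i p))
      (fun i => B2_x i p ▸ hasDerivAt_pdx (hB2 i p)) j).deriv

theorem toda_third_order_symmetry_general {h : ℤ → ℝ × ℝ → ℝ}
    (hb : ∀ j, Differentiable ℝ (b j)) (hB1 : ∀ j, Differentiable ℝ (B1 j))
    (hB2 : ∀ j, Differentiable ℝ (B2 j)) (hB3 : ∀ j, Differentiable ℝ (B3 j))
    (b_x : ∀ j p, pdx (b j) p = B1 j p - B1 (j - 1) p)
    (b_y : ∀ j p, pdy (b j) p = h j p - h (j - 1) p)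
    (B1_x : ∀ j p, pdx (B1 j) p = B1 j p * (b (j + 1) p - b j p) + B2 j p - B2 (j - 1) p)
    (B1_y : ∀ j p, pdy (B1 j) p = h j p * (b (j + 1) p - b j p))
    (B2_x : ∀ j p, pdx (B2 j) p = B2 j p * (b (j + 2) p - b j p) + B3 j p - B3 (j - 1) p)
    (B2_y : ∀ j p, pdy (B2 j) p = h j p * B1 (j + 1) p - h (j + 1) p * B1 j p)
    (B3_y : ∀ j p, pdy (B3 j) p = h j p * B2 (j + 1) p - h (j + 2) p * B2 j p)
    (j : ℤ) (p : ℝ × ℝ) :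
    pdy (pdx (thirdOrderFlow b B1 B2 j)) p
      = h j p * (thirdOrderFlow b B1 B2 (j + 1) p - thirdOrderFlow b B1 B2 j p)
        - h (j - 1) p * (thirdOrderFlow b B1 B2 j p - thirdOrderFlow b B1 B2 (j - 1) p) := by
  have flux_y := hasDerivAt_thirdOrderFlux (h := fun i => h i p) (b := fun i t => b i (p.1, t))
    (B1 := fun i t => B1 i (p.1, t)) (B2 := fun i t => B2 i (p.1, t))
    (B3 := fun i t => B3 i (p.1, t))
    (fun i => b_y i p ▸ hasDerivAt_pdy (hb i p)) (fun i => B1_y i p ▸ hasDerivAt_pdy (hB1 i p))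
    (fun i => B2_y i p ▸ hasDerivAt_pdy (hB2 i p)) (fun i => B3_y i p ▸ hasDerivAt_pdy (hB3 i p))
  have flux_sub_y := (flux_y j).sub (flux_y (j - 1))
  rw [sub_add_cancel] at flux_sub_y
  rw [pdx_thirdOrderFlow hb hB1 hB2 b_x B1_x B2_x]
  exact flux_sub_y.deriv

end LatticeFields

/-- the third-order flow
`q_t(j) = b(j)³ + b⁽²⁾(j) + b⁽²⁾(j−1) + b⁽²⁾(j−2) + b⁽¹⁾(j)(2b(j) + b(j+1)) + b⁽¹⁾(j−1)(2b(j) + b(j−1))`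
defines a symmetry of the 2D Toda lattice. Here `B1, B2, B3` play the roles of the
nonlocal variables `b⁽¹⁾, b⁽²⁾, b⁽³⁾`. -/
theorem toda_third_order_symmetry
    (q h b : ℤ → ℝ × ℝ → ℝ)
    (hq : ∀ j, ContDiff ℝ 3 (q j))
    (hh : ∀ j p, h j p = Real.exp (q (j + 1) p - q j p))
    (hb : ∀ j, b j = pdx (q j))
    (toda : ∀ (j : ℤ) (p : ℝ × ℝ), pdy (pdx (q j)) p = h j p - h (j - 1) p)
    (B1 B2 B3 : ℤ → ℝ × ℝ → ℝ)
    (hB1 : ∀ j, ContDiff ℝ 1 (B1 j))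
    (hB2 : ∀ j, ContDiff ℝ 1 (B2 j))
    (hB3 : ∀ j, ContDiff ℝ 1 (B3 j))
    (e1 : ∀ (j : ℤ) (p : ℝ × ℝ), pdx (b j) p = B1 j p - B1 (j - 1) p)
    (e2 : ∀ (j : ℤ) (p : ℝ × ℝ), pdy (B1 j) p = pdx (h j) p)
    (e3 : ∀ (j : ℤ) (p : ℝ × ℝ),
        pdx (B1 j) p = B1 j p * (b (j + 1) p - b j p) + B2 j p - B2 (j - 1) p)
    (e4 : ∀ (j : ℤ) (p : ℝ × ℝ),
        pdy (B2 j) p = h j p * B1 (j + 1) p - h (j + 1) p * B1 j p)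
    (e5 : ∀ (j : ℤ) (p : ℝ × ℝ),
        pdx (B2 j) p = B2 j p * (b (j + 2) p - b j p) + B3 j p - B3 (j - 1) p)
    (e6 : ∀ (j : ℤ) (p : ℝ × ℝ),
        pdy (B3 j) p = h j p * B2 (j + 1) p - h (j + 2) p * B2 j p)
    (F : ℤ → ℝ × ℝ → ℝ)
    (hF : ∀ j p, F j p = (b j p) ^ 3 + B2 j p + B2 (j - 1) p + B2 (j - 2) p
        + B1 j p * (2 * b j p + b (j + 1) p)
        + B1 (j - 1) p * (2 * b j p + b (j - 1) p)) :
    ∀ (j : ℤ) (p : ℝ × ℝ),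
      pdy (pdx (F j)) p
        = h j p * (F (j + 1) p - F j p) - h (j - 1) p * (F j p - F (j - 1) p) := by
  obtain rfl : b = fun j => pdx (q j) := funext hb
  obtain rfl : F = thirdOrderFlow (fun j => pdx (q j)) B1 B2 := by
    funext j p
    rw [hF]
    simp only [thirdOrderFlow, Pi.add_apply, Pi.mul_apply, Pi.pow_apply, Pi.ofNat_apply]
    ring
  have hq' (j : ℤ) : Differentiable ℝ (q j) := (hq j).differentiable three_ne_zero
  have h_x (j : ℤ) (p : ℝ × ℝ) : pdx (h j) p = h j p * (pdx (q (j + 1)) p - pdx (q j) p) := by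
    rw [funext (hh j)]
    exact pdx_exp_sub (hq' (j + 1) p) (hq' j p)
  exact toda_third_order_symmetry_general
    (fun j => (contDiff_pdx (m := 1) (hq j) (by norm_num)).differentiable one_ne_zero)
    (fun j => (hB1 j).differentiable one_ne_zero) (fun j => (hB2 j).differentiable one_ne_zero)
    (fun j => (hB3 j).differentiable one_ne_zero) e1 toda e3
    (fun j p => (e2 j p).trans (h_x j p)) e5 e4 e6
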